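/- arXiv:2510.10860 — 2 statements merged into one kernel-verified Lean document; each statement's English description precedes it below -/
import Mathlib

section
/- Let X and Y be metric spaces with Y compact, and let f : X × Y → ℝ be a function that is bounded below, lower semicontinuous on X × Y, and such that x ↦ f(x, y) is continuous on X for every fixed y ∈ Y. Then the function g : X → ℝ defined by g(x) = inf_{y ∈ Y} f(x, y) is continuous. -/
/-!
As an infimum of the continuous functions `x ↦ f (x, y)`, bounded below, `g` is upper
semicontinuous. For lower semicontinuity at `x`, let `a < b < g x`. Each point `(x, y)` has a
neighbourhood on which `f > b`, and by the tube lemma for the compact space `Y` these cover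
`U × Y` for some neighbourhood `U` of `x`. Hence `g ≥ b > a` on `U`.
-/

open Filter Topology

/-- Let `X`, `Y` be metric spaces with `Y` compact (and nonempty), and let `f : X × Y → ℝ` be
lower bounded, lower semicontinuous, and continuous in the first variable for every fixed `y`.
Then `g x = ⨅ y, f (x, y)` is continuous. -/
theorem stmt_4
    {X Y : Type*} [MetricSpace X] [MetricSpace Y] [CompactSpace Y] [Nonempty Y]
    (f : X × Y → ℝ) (hbdd : ∃ c : ℝ, ∀ p, c ≤ f p)
    (hlsc : LowerSemicontinuous f)
    (hcont : ∀ y : Y, Continuous fun x => f (x, y)) :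
    Continuous fun x => ⨅ y : Y, f (x, y) := by
  obtain ⟨c, hc⟩ := hbdd
  have hbelow : ∀ x, BddBelow (Set.range fun y => f (x, y)) := fun x =>
    ⟨c, Set.forall_mem_range.2 fun y => hc (x, y)⟩
  refine continuous_iff_lower_upperSemicontinuous.2
    ⟨fun x a ha => ?_, upperSemicontinuous_ciInf hbelow fun y => (hcont y).upperSemicontinuous⟩
  -- The infimum over `y` only preserves weak inequalities, so an intermediate level is needed.
  obtain ⟨b, hab, hb⟩ := exists_between ha
  have htube : ∀ᶠ x' in 𝓝 x, ∀ y ∈ (Set.univ : Set Y), b < f (x', y) :=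
    isCompact_univ.eventually_forall_of_forall_eventually fun y _ =>
      hlsc (x, y) b (hb.trans_le (ciInf_le (hbelow x) y))
  filter_upwards [htube] with x' hx'
  exact hab.trans_le (le_ciInf fun y => (hx' y trivial).le)
end

section
/- Let (Ω, F, P₀) be a probability space and let (f_n) be a sequence of probability densities with respect to P₀ converging weakly in L¹(P₀) to a probability density f. Then liminf_{n→∞} ∫ f_n log f_n dP₀ ≥ ∫ f log f dP₀; that is, the relative entropy functional is lower semicontinuous along weak L¹ convergence of densities. -/
/-!
The entropy is a supremum of weakly continuous affine functionals. For `t ≥ 0` and `c > 0`,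
`t * (1 + log c) - c ≤ t * log t`, with equality at `t = c`: this is the tangent line of
`x * log x` at `c` (`tangent_le`). If `c` is a measurable function of `ω` with values in a compact
subset of `(0, ∞)`, then `g ↦ ∫ g * (1 + log c) - c` is weakly continuous, so its value at the
limit density is at most the `liminf` of the entropies (`integral_tangent_le_liminf`).

Let `c k = clamp k flim` be the truncation of the limit density to `[e⁻¹⁻ᵏ, e⁻¹⁺ᵏ]`. Since this
interval is centred (on the logarithmic scale) at the minimiser `e⁻¹` of `x * log x`, the tangent
line at `c k`, evaluated at `flim`, is still at least `-e⁻¹` (`tangent_clamp_nonneg`), and it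
converges pointwise to `flim * log flim`. Fatou's lemma concludes.
-/

open MeasureTheory Filter Topology

/-- The tangent line of `x * log x` at `c` lies below the graph. -/
lemma tangent_le {t c : ℝ} (ht : 0 ≤ t) (hc : 0 < c) :
    t * (1 + Real.log c) - c ≤ t * Real.log t := by
  rcases ht.eq_or_lt with rfl | ht
  · simpa using hc.le
  · have h := Real.log_le_sub_one_of_pos (div_pos hc ht)
    rw [Real.log_div hc.ne' ht.ne'] at h
    have h2 := mul_le_mul_of_nonneg_left h ht.le
    have h3 : t * (c / t - 1) = c - t := by field_simp
    rw [h3] at h2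
    linarith

/-- Truncation of `t` to `[e⁻¹⁻ᵏ, e⁻¹⁺ᵏ]`. -/
noncomputable def clamp (k : ℕ) (t : ℝ) : ℝ :=
  max (Real.exp (-1 - k)) (min t (Real.exp (-1 + k)))

lemma clamp_pos (k : ℕ) (t : ℝ) : 0 < clamp k t :=
  lt_max_of_lt_left (Real.exp_pos _)

lemma clamp_le (k : ℕ) (t : ℝ) : clamp k t ≤ Real.exp (-1 + k) :=
  max_le (Real.exp_le_exp.2 (by have := k.cast_nonneg (α := ℝ); linarith)) (min_le_right _ _)

lemma abs_one_add_log_clamp_le (k : ℕ) (t : ℝ) : |1 + Real.log (clamp k t)| ≤ k := by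
  have h1 := (Real.le_log_iff_exp_le (clamp_pos k t)).2 (le_max_left _ _)
  have h2 := (Real.log_le_iff_le_exp (clamp_pos k t)).2 (clamp_le k t)
  rw [abs_le]
  constructor <;> linarith

lemma measurable_clamp (k : ℕ) : Measurable (clamp k) := by
  unfold clamp
  fun_prop

lemma tangent_clamp_nonneg (k : ℕ) (t : ℝ) :
    0 ≤ t * (1 + Real.log (clamp k t)) - clamp k t + Real.exp (-1) := by
  have hk := k.cast_nonneg (α := ℝ)
  -- `x * log x` has minimum `-e⁻¹`, by comparison with its horizontal tangent at `e⁻¹`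
  have h0 := tangent_le (clamp_pos k t).le (Real.exp_pos (-1))
  rw [Real.log_exp] at h0
  -- the truncation only moves points towards `e⁻¹`, where `1 + log` changes sign
  have h1 : 0 ≤ (t - clamp k t) * (1 + Real.log (clamp k t)) := by
    rcases le_total t (Real.exp (-1 - k)) with h | h
    · have hc : clamp k t = Real.exp (-1 - k) := max_eq_left ((min_le_left _ _).trans h)
      rw [hc, Real.log_exp]
      exact mul_nonneg_of_nonpos_of_nonpos (by linarith) (by linarith)
    · rcases le_total t (Real.exp (-1 + k)) with h' | h'
      · have hc : clamp k t = t := by rw [clamp, min_eq_left h', max_eq_right h]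
        simp [hc]
      · have hc : clamp k t = Real.exp (-1 + k) := by
          rw [clamp, min_eq_right h', max_eq_right (Real.exp_le_exp.2 (by linarith))]
        rw [hc, Real.log_exp]
        exact mul_nonneg (by linarith) (by linarith)
  linarith

lemma tendsto_clamp {t : ℝ} (ht : 0 ≤ t) : Tendsto (fun k => clamp k t) atTop (𝓝 t) := by
  have hL : Tendsto (fun k : ℕ => Real.exp (-1 - k)) atTop (𝓝 0) :=
    Real.tendsto_exp_atBot.comp
      (tendsto_atBot_add_const_left _ _ (tendsto_neg_atTop_atBot.comp tendsto_natCast_atTop_atTop))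
  have hU : Tendsto (fun k : ℕ => Real.exp (-1 + k)) atTop atTop :=
    Real.tendsto_exp_atTop.comp (tendsto_atTop_add_const_left _ _ tendsto_natCast_atTop_atTop)
  have h : Tendsto (fun k : ℕ => max (Real.exp (-1 - k)) t) atTop (𝓝 t) := by
    simpa [ht] using hL.max (tendsto_const_nhds (x := t))
  refine h.congr' ?_
  filter_upwards [hU.eventually_ge_atTop t] with k hk
  rw [clamp, min_eq_left hk]

lemma tendsto_tangent_clamp {t : ℝ} (ht : 0 ≤ t) :
    Tendsto (fun k => t * (1 + Real.log (clamp k t)) - clamp k t) atTop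
      (𝓝 (t * Real.log t)) := by
  rcases ht.eq_or_lt with rfl | hpos
  · simpa using (tendsto_clamp le_rfl).neg
  · have h := (((tendsto_clamp ht).log hpos.ne').const_add 1 |>.const_mul t).sub (tendsto_clamp ht)
    convert h using 2
    ring

lemma ofReal_integral_le_lintegral_ofReal {Ω : Type*} [MeasurableSpace Ω] {μ : Measure Ω}
    (g : Ω → ℝ) : ENNReal.ofReal (∫ ω, g ω ∂μ) ≤ ∫⁻ ω, ENNReal.ofReal (g ω) ∂μ := by
  by_cases hg : Integrable g μ
  · rw [integral_eq_lintegral_pos_part_sub_lintegral_neg_part hg]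
    exact (ENNReal.ofReal_le_ofReal (sub_le_self _ ENNReal.toReal_nonneg)).trans
      ENNReal.ofReal_toReal_le
  · simp [integral_undef hg]

/-- The affine functional given by the tangent lines at `c` is weakly continuous and bounded by the
entropy, provided `1 + log c` and `c` are bounded. -/
lemma integral_tangent_le_liminf
    {Ω : Type*} [MeasurableSpace Ω] (P₀ : Measure Ω) [IsProbabilityMeasure P₀]
    (f : ℕ → Ω → ℝ) (flim : Ω → ℝ) (hfnn : ∀ n ω, 0 ≤ f n ω)
    (hfi : ∀ n, Integrable (f n) P₀) (hflimi : Integrable flim P₀)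
    (hconv : ∀ φ : Ω → ℝ, Measurable φ → (∃ C, ∀ ω, |φ ω| ≤ C) →
      Tendsto (fun n => ∫ ω, f n ω * φ ω ∂P₀) atTop (𝓝 (∫ ω, flim ω * φ ω ∂P₀)))
    (c : Ω → ℝ) (hcm : Measurable c) (hc : ∀ ω, 0 < c ω) {A B : ℝ} (hcA : ∀ ω, c ω ≤ A)
    (hcB : ∀ ω, |1 + Real.log (c ω)| ≤ B) :
    ENNReal.ofReal (∫ ω, (flim ω * (1 + Real.log (c ω)) - c ω + Real.exp (-1)) ∂P₀) ≤
      Filter.atTop.liminf fun n =>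
        ∫⁻ ω, ENNReal.ofReal (f n ω * Real.log (f n ω) + Real.exp (-1)) ∂P₀ := by
  have hlm : Measurable fun ω => 1 + Real.log (c ω) := by fun_prop
  have hci : Integrable c P₀ := Integrable.of_bound hcm.aestronglyMeasurable A
    (ae_of_all _ fun ω => by rw [Real.norm_eq_abs, abs_of_pos (hc ω)]; exact hcA ω)
  have hmul : ∀ g : Ω → ℝ, Integrable g P₀ →
      Integrable (fun ω => g ω * (1 + Real.log (c ω))) P₀ := fun g hg =>
    hg.mul_bdd hlm.aestronglyMeasurable (ae_of_all _ hcB)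
  have hsplit : ∀ g : Ω → ℝ, Integrable g P₀ →
      ∫ ω, (g ω * (1 + Real.log (c ω)) - c ω + Real.exp (-1)) ∂P₀ =
        ∫ ω, g ω * (1 + Real.log (c ω)) ∂P₀ - ∫ ω, c ω ∂P₀ + Real.exp (-1) := fun g hg => by
    have hsub : Integrable (fun ω => g ω * (1 + Real.log (c ω)) - c ω) P₀ := (hmul g hg).sub hci
    rw [integral_add hsub (integrable_const _), integral_sub (hmul g hg) hci]
    simp
  have hlim : Tendsto
      (fun n => ENNReal.ofReal (∫ ω, (f n ω * (1 + Real.log (c ω)) - c ω + Real.exp (-1)) ∂P₀))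
      atTop (𝓝 (ENNReal.ofReal
        (∫ ω, (flim ω * (1 + Real.log (c ω)) - c ω + Real.exp (-1)) ∂P₀))) := by
    refine ENNReal.tendsto_ofReal ?_
    simp only [hsplit _ (hfi _), hsplit _ hflimi]
    exact ((hconv _ hlm ⟨B, hcB⟩).sub_const _).add_const _
  rw [← hlim.liminf_eq]
  refine liminf_le_liminf (Eventually.of_forall fun n => ?_)
  refine (ofReal_integral_le_lintegral_ofReal _).trans
    (lintegral_mono fun ω => ENNReal.ofReal_le_ofReal ?_)
  linarith [tangent_le (hfnn n ω) (hc ω)]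

/-- Lower semicontinuity of the relative entropy along weak `L¹` convergence of probability
densities: `liminfₙ ∫ fₙ log fₙ dP₀ ≥ ∫ flim log flim dP₀`. The entropy integrals, well defined
in `(-∞, +∞]` since `x log x ≥ -e⁻¹`, are expressed as lower integrals of
`f log f + e⁻¹ ≥ 0` (a constant shift by `e⁻¹` on both sides as `P₀` is a probability measure). -/
theorem stmt_8
    {Ω : Type*} [MeasurableSpace Ω] (P₀ : Measure Ω) [IsProbabilityMeasure P₀]
    (f : ℕ → Ω → ℝ) (flim : Ω → ℝ)
    (hfm : ∀ n, Measurable (f n)) (hfnn : ∀ n ω, 0 ≤ f n ω)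
    (hfint : ∀ n, ∫ ω, f n ω ∂P₀ = 1)
    (hflimm : Measurable flim) (hflimnn : ∀ ω, 0 ≤ flim ω)
    (hflimint : ∫ ω, flim ω ∂P₀ = 1)
    (hconv : ∀ φ : Ω → ℝ, Measurable φ → (∃ C, ∀ ω, |φ ω| ≤ C) →
      Tendsto (fun n => ∫ ω, f n ω * φ ω ∂P₀) atTop (𝓝 (∫ ω, flim ω * φ ω ∂P₀))) :
    ∫⁻ ω, ENNReal.ofReal (flim ω * Real.log (flim ω) + Real.exp (-1)) ∂P₀ ≤
      Filter.atTop.liminf fun n =>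
        ∫⁻ ω, ENNReal.ofReal (f n ω * Real.log (f n ω) + Real.exp (-1)) ∂P₀ := by
  have hfi : ∀ n, Integrable (f n) P₀ := fun n =>
    Integrable.of_integral_ne_zero (by rw [hfint n]; exact one_ne_zero)
  have hflimi : Integrable flim P₀ :=
    Integrable.of_integral_ne_zero (by rw [hflimint]; exact one_ne_zero)
  have hcm : ∀ k, Measurable fun ω => clamp k (flim ω) := fun k =>
    (measurable_clamp k).comp hflimm
  -- the tangent lines at the truncated limit density
  let h : ℕ → Ω → ℝ := fun k ω =>
    flim ω * (1 + Real.log (clamp k (flim ω))) - clamp k (flim ω) + Real.exp (-1)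
  have hm : ∀ k, Measurable (h k) := fun k => by
    have := hcm k
    fun_prop
  have hlim : ∀ ω, Tendsto (fun k => ENNReal.ofReal (h k ω)) atTop
      (𝓝 (ENNReal.ofReal (flim ω * Real.log (flim ω) + Real.exp (-1)))) := fun ω =>
    ENNReal.tendsto_ofReal ((tendsto_tangent_clamp (hflimnn ω)).add_const _)
  have hi : ∀ k, Integrable (h k) P₀ := fun k => by
    refine ((hflimi.mul_bdd (c := k) ((hcm k).log.const_add 1).aestronglyMeasurable
      (ae_of_all _ fun ω => abs_one_add_log_clamp_le k (flim ω))).sub ?_).add (integrable_const _)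
    refine Integrable.of_bound (hcm k).aestronglyMeasurable (Real.exp (-1 + k))
      (ae_of_all _ fun ω => ?_)
    rw [Real.norm_eq_abs, abs_of_pos (clamp_pos _ _)]
    exact clamp_le _ _
  calc ∫⁻ ω, ENNReal.ofReal (flim ω * Real.log (flim ω) + Real.exp (-1)) ∂P₀
      = ∫⁻ ω, atTop.liminf (fun k => ENNReal.ofReal (h k ω)) ∂P₀ :=
        lintegral_congr fun ω => (hlim ω).liminf_eq.symm
    _ ≤ atTop.liminf fun k => ∫⁻ ω, ENNReal.ofReal (h k ω) ∂P₀ :=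
        lintegral_liminf_le fun k => (hm k).ennreal_ofReal
    _ ≤ _ := by
      refine liminf_le_of_frequently_le' (Frequently.of_forall fun k => ?_)
      rw [← ofReal_integral_eq_lintegral_ofReal (hi k)
        (ae_of_all _ fun ω => tangent_clamp_nonneg k (flim ω))]
      exact integral_tangent_le_liminf P₀ f flim hfnn hfi hflimi hconv _ (hcm k)
        (fun ω => clamp_pos k (flim ω)) (fun ω => clamp_le k (flim ω))
        (fun ω => abs_one_add_log_clamp_le k (flim ω))
end
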